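/- Let μ ∈ M¹₊(Ω). If μ is a good measure relative to g for every continuous nondecreasing function g : ℝ → ℝ vanishing on (−∞, 0], then μ is absolutely continuous with respect to Lebesgue measure, i.e., μ ∈ L¹_ρ(Ω): there exists f ∈ L¹(Ω, ρ(x) dx) with dμ = f dx. -/

import Mathlib

open MeasureTheory Set Filter Topology
open scoped ENNReal NNReal

noncomputable section

/-- Euclidean space `ℝ^N`. -/
abbrev Euc (N : ℕ) : Type := EuclideanSpace ℝ (Fin N)

/-- `ρ(x) = dist(x, ∂Ω)`, realized as the distance from `x` to the complement of `Ω`. -/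
def rho {N : ℕ} (Ω : Set (Euc N)) (x : Euc N) : ℝ := Metric.infDist x Ωᶜ

/-- The Laplacian (in the space variable) of `f : ℝ^N → ℝ`. -/
def lap {N : ℕ} (f : Euc N → ℝ) (x : Euc N) : ℝ :=
  ∑ i : Fin N, fderiv ℝ (fun y => fderiv ℝ f y (EuclideanSpace.single i 1)) x
    (EuclideanSpace.single i 1)

/-- The parabolic cylinder `Q_T = Ω × (0,T)`. -/
def QT {N : ℕ} (Ω : Set (Euc N)) (T : ℝ) : Set (Euc N × ℝ) := Ω ×ˢ Ioo 0 T

/-- `∂_t ζ + Δ ζ` for a function `ζ(x,t)` (curried). -/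
def heatAdj {N : ℕ} (ζ : Euc N → ℝ → ℝ) (p : Euc N × ℝ) : ℝ :=
  deriv (ζ p.1) p.2 + lap (fun y => ζ y p.2) p.1

/-- `C^{2,1}` regularity: `ζ`, `∂_t ζ`, `∇_x ζ` and `D²_x ζ` exist and are continuous. -/
def C21 {N : ℕ} (ζ : Euc N → ℝ → ℝ) : Prop :=
  Continuous (fun p : Euc N × ℝ => ζ p.1 p.2) ∧
  (∀ (x : Euc N) (t : ℝ), DifferentiableAt ℝ (ζ x) t) ∧
  Continuous (fun p : Euc N × ℝ => deriv (ζ p.1) p.2) ∧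
  (∀ (t : ℝ) (x : Euc N), DifferentiableAt ℝ (fun y => ζ y t) x) ∧
  Continuous (fun p : Euc N × ℝ => fderiv ℝ (fun y => ζ y p.2) p.1) ∧
  (∀ (t : ℝ) (x : Euc N), DifferentiableAt ℝ (fun y => fderiv ℝ (fun z => ζ z t) y) x) ∧
  Continuous (fun p : Euc N × ℝ => fderiv ℝ (fun y => fderiv ℝ (fun z => ζ z p.2) y) p.1)

/-- Membership in `C^{2,1}_{ℓ,0}(Q̄_T)` : `C^{2,1}` regularity together with
vanishing on `∂Ω × [0,T] ∪ Ω̄ × {T}`. -/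
def TestZero {N : ℕ} (Ω : Set (Euc N)) (T : ℝ) (ζ : Euc N → ℝ → ℝ) : Prop :=
  C21 ζ ∧ (∀ x ∈ frontier Ω, ∀ t ∈ Icc (0:ℝ) T, ζ x t = 0) ∧
  (∀ x ∈ closure Ω, ζ x T = 0)

/-- `g : ℝ → ℝ` continuous, nondecreasing and vanishing on `(-∞,0]`. -/
def GoodG (g : ℝ → ℝ) : Prop := Continuous g ∧ Monotone g ∧ ∀ r : ℝ, r ≤ 0 → g r = 0

/-- `μ ∈ M¹₊(Ω)` : a positive Radon measure on `Ω` with `∫_Ω ρ dμ < ∞`. -/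
def MemM1 {N : ℕ} (Ω : Set (Euc N)) (μ : Measure (Euc N)) : Prop :=
  μ Ωᶜ = 0 ∧ (∀ K : Set (Euc N), K ⊆ Ω → IsCompact K → μ K < ⊤) ∧
  (∫⁻ x, ENNReal.ofReal (rho Ω x) ∂μ) < ⊤

/-- A positive Radon measure on the (open) set `U`. -/
def RadonOn {N : ℕ} (U : Set (Euc N)) (ν : Measure (Euc N)) : Prop :=
  ν Uᶜ = 0 ∧ ∀ K : Set (Euc N), K ⊆ U → IsCompact K → ν K < ⊤

/-- Weak solution of `(P_μ)` : `∂_t u - Δu + g(u) = 0` in `Q_T`, `u = 0` on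
`∂Ω × (0,T)`, `u(·,0) = μ`. -/
def WeakSol {N : ℕ} (Ω : Set (Euc N)) (T : ℝ) (g : ℝ → ℝ) (μ : Measure (Euc N))
    (u : Euc N × ℝ → ℝ) : Prop :=
  IntegrableOn u (QT Ω T) ∧
  IntegrableOn (fun p => g (u p) * rho Ω p.1) (QT Ω T) ∧
  ∀ ζ : Euc N → ℝ → ℝ, TestZero Ω T ζ →
    (∫ p in QT Ω T,
      (-(u p) * deriv (ζ p.1) p.2 - u p * lap (fun y => ζ y p.2) p.1 + ζ p.1 p.2 * g (u p)))
      = ∫ x, ζ x 0 ∂μ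

/-- Weak subsolution of `(P_μ)`. -/
def WeakSubSol {N : ℕ} (Ω : Set (Euc N)) (T : ℝ) (g : ℝ → ℝ) (μ : Measure (Euc N))
    (u : Euc N × ℝ → ℝ) : Prop :=
  IntegrableOn u (QT Ω T) ∧
  IntegrableOn (fun p => g (u p) * rho Ω p.1) (QT Ω T) ∧
  ∀ ζ : Euc N → ℝ → ℝ, TestZero Ω T ζ → (∀ x t, 0 ≤ ζ x t) →
    (∫ p in QT Ω T,
      (-(u p) * deriv (ζ p.1) p.2 - u p * lap (fun y => ζ y p.2) p.1 + ζ p.1 p.2 * g (u p)))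
      ≤ ∫ x, ζ x 0 ∂μ

/-- `μ` is a good measure relative to `g` : `(P_μ)` admits a weak solution. -/
def GoodMeasure {N : ℕ} (Ω : Set (Euc N)) (T : ℝ) (g : ℝ → ℝ) (μ : Measure (Euc N)) : Prop :=
  ∃ u, WeakSol Ω T g μ u

/-- Essential limit of `F(t)` as `t → 0⁺` equals `L`. -/
def EssLimInit (F : ℝ → ℝ) (L : ℝ) : Prop :=
  Tendsto F ((𝓝[>] (0:ℝ)) ⊓ (ae (volume : Measure ℝ))) (𝓝 L)

/-- Essential limit of `F(t)` as `t → 0⁺` is `+∞`. -/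
def EssLimInitTop (F : ℝ → ℝ) : Prop :=
  Tendsto F ((𝓝[>] (0:ℝ)) ⊓ (ae (volume : Measure ℝ))) atTop

/-- `ν` is the initial trace of `u` on `U ⊆ Ω` : for every `φ ∈ C_c(U)`,
`ess lim_{t→0} ∫_Ω u(·,t) φ dx = ∫ φ dν`. -/
def InitTraceOn {N : ℕ} (Ω U : Set (Euc N)) (u : Euc N × ℝ → ℝ) (ν : Measure (Euc N)) : Prop :=
  ∀ φ : Euc N → ℝ, Continuous φ → HasCompactSupport φ → tsupport φ ⊆ U →
    EssLimInit (fun t => ∫ x in Ω, u (x, t) * φ x) (∫ x, φ x ∂ν)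

/-- `μstar` is the reduced measure of `μ` : the largest good measure `≤ μ`. -/
def IsReducedMeasure {N : ℕ} (Ω : Set (Euc N)) (T : ℝ) (g : ℝ → ℝ)
    (μ μstar : Measure (Euc N)) : Prop :=
  MemM1 Ω μstar ∧ μstar ≤ μ ∧ GoodMeasure Ω T g μstar ∧
  ∀ ν : Measure (Euc N), MemM1 Ω ν → GoodMeasure Ω T g ν → ν ≤ μ → ν ≤ μstar

/-- The `N`-dimensional Hausdorff measure on `ℝ^N`. -/
def hausN {N : ℕ} : Measure (Euc N) := MeasureTheory.Measure.hausdorffMeasure (N : ℝ)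

/-!
A compact Lebesgue-null set `K ⊆ Ω` carries test functions `ψ n` with `ψ n ≥ 1` on `K` which
concentrate on `K` and satisfy `|Δψ n| ≤ κ n * ψ n` up to a small error. Multiplying `ψ n` by a time
profile decaying at the rate `κ n` and testing the equation with the product bounds `μ K` by the
integral of `κ n * exp (-κ n * t) * ψ n * u⁺` plus that of `ψ n * g (u)`, up to constants. Take `g`
growing so fast that, for all `n` at once, `g r ≥ 3 * κ n * r` as soon as `r ≥ n + 1`. Where
`u ≥ n + 1`, the first integrand is then at most `ψ n * g (u)`, whose integral tends to `0` by
dominated convergence; where `u ≤ n + 1`, it contributes at most `(n + 1) * ∫ ψ n`, because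
`κ * exp (-κ * t)` has integral at most `1` in time. Hence `μ K = 0`, and `μ` is absolutely
continuous by inner regularity.
-/

/-! ### Fast growing nonlinearities -/

lemma GoodG.nonneg {g : ℝ → ℝ} (hg : GoodG g) (r : ℝ) : 0 ≤ g r := by
  rcases le_total r 0 with hr | hr
  · exact (hg.2.2 r hr).ge
  · exact (hg.2.2 0 le_rfl).ge.trans (hg.2.1 hr)

lemma exists_goodG_forall_mul_le {b : ℕ → ℝ} (hb : ∀ n, 0 ≤ b n) :
    ∃ g, GoodG g ∧ ∀ (n : ℕ) (r : ℝ), n + 1 ≤ r → b n * r ≤ g r := by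
  let hinge (n : ℕ) (r : ℝ) : ℝ := (n + 1) * b n * max (r - n) 0
  have hinge_nonneg (n r) : 0 ≤ hinge n r := by have := hb n; positivity
  have hinge_eq_zero {n : ℕ} {r : ℝ} (h : r ≤ n) : hinge n r = 0 := by
    simp only [hinge, max_eq_right (sub_nonpos.2 h), mul_zero]
  have hinge_mono (n) : Monotone (hinge n) := fun r s hrs ↦ by
    have := hb n
    dsimp only [hinge]
    gcongr
  have finite_support (r : ℝ) : {n | hinge n r ≠ 0}.Finite :=
    (Set.finite_lt_nat ⌈r⌉₊).subset fun n hn ↦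
      Nat.lt_ceil.2 (lt_of_not_ge fun h ↦ hn (hinge_eq_zero h))
  have locallyFinite : LocallyFinite fun n ↦ Function.support (hinge n) := fun r ↦
    ⟨Iio (r + 1), Iio_mem_nhds (lt_add_one r), (finite_support (r + 1)).subset <| by
      rintro n ⟨s, hs, hsr⟩
      exact (((hinge_nonneg n s).lt_of_ne' hs).trans_le (hinge_mono n hsr.le)).ne'⟩
  refine ⟨fun r ↦ ∑ᶠ n, hinge n r, ⟨?_, fun r s hrs ↦ ?_, fun r hr ↦ ?_⟩, fun n r hr ↦ ?_⟩
  · exact continuous_finsum (fun n ↦ by fun_prop) locallyFinite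
  · exact finsum_le_finsum' (finite_support r) (finite_support s) fun n ↦ hinge_mono n hrs
  · exact finsum_eq_zero_of_forall_eq_zero fun n ↦ hinge_eq_zero (hr.trans n.cast_nonneg)
  · have hr_le : r ≤ (n + 1) * (r - n) := by nlinarith [n.cast_nonneg (α := ℝ)]
    calc b n * r ≤ b n * ((n + 1) * (r - n)) := by gcongr; exact hb n
      _ = (n + 1) * b n * (r - n) := by ring
      _ ≤ hinge n r := by have := hb n; dsimp only [hinge]; gcongr; exact le_max_left _ _
      _ ≤ ∑ᶠ m, hinge m r := single_le_finsum n (finite_support r) fun m ↦ hinge_nonneg m r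

/-! ### The Laplacian -/

section Laplacian

variable {N : ℕ} {f h : Euc N → ℝ}

lemma lap_add (hf : ContDiff ℝ 2 f) (hh : ContDiff ℝ 2 h) (x : Euc N) :
    lap (fun y ↦ f y + h y) x = lap f x + lap h x := by
  have differentiable_fderiv {w : Euc N → ℝ} (hw : ContDiff ℝ 2 w) (e : Euc N) :
      Differentiable ℝ (fun y ↦ fderiv ℝ w y e) :=
    ((hw.fderiv_right le_rfl).clm_apply contDiff_const).differentiable one_ne_zero
  have fderiv_add (e : Euc N) : (fun y ↦ fderiv ℝ (fun z ↦ f z + h z) y e) =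
      fun y ↦ fderiv ℝ f y e + fderiv ℝ h y e := funext fun y ↦ by
    rw [fderiv_fun_add (hf.differentiable two_ne_zero y) (hh.differentiable two_ne_zero y),
      add_apply]
  simp only [lap, fderiv_add, ← Finset.sum_add_distrib]
  refine Finset.sum_congr rfl fun i _ ↦ ?_
  rw [fderiv_fun_add (differentiable_fderiv hf _ x) (differentiable_fderiv hh _ x),
    add_apply]

lemma lap_const_mul (c : ℝ) (f : Euc N → ℝ) (x : Euc N) :
    lap (fun y ↦ c * f y) x = c * lap f x := by
  have fderiv_mul (w : Euc N → ℝ) (y : Euc N) : fderiv ℝ (fun z ↦ c * w z) y = c • fderiv ℝ w y :=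
    congrFun (fderiv_const_smul_field (f := w) c) y
  simp only [lap, fderiv_mul, smul_apply, smul_eq_mul, Finset.mul_sum]

lemma continuous_lap (hf : ContDiff ℝ 2 f) : Continuous (lap f) := by
  refine continuous_finsetSum _ fun i _ ↦ Continuous.clm_apply ?_ continuous_const
  exact ((hf.fderiv_right le_rfl).clm_apply contDiff_const).continuous_fderiv one_ne_zero

lemma support_lap_subset : Function.support (lap f) ⊆ tsupport f := by
  refine (Finset.support_sum _ _).trans (iUnion₂_subset fun i _ ↦ ?_)
  let e : Euc N := EuclideanSpace.single i 1
  exact (subset_tsupport _).trans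
    ((tsupport_fderiv_apply_subset ℝ e).trans (tsupport_fderiv_apply_subset ℝ e))

lemma exists_forall_abs_lap_le (hf : ContDiff ℝ 2 f) (hf' : HasCompactSupport f) :
    ∃ C, ∀ x, |lap f x| ≤ C :=
  (continuous_lap hf).bounded_above_of_compact_support (hf'.mono' support_lap_subset)

end Laplacian

/-! ### Test functions -/

/-- `ψ` is a nonnegative `C²` function with compact support contained in `U`. -/
structure IsNonnegTest {N : ℕ} (U : Set (Euc N)) (ψ : Euc N → ℝ) : Prop where
  contDiff : ContDiff ℝ 2 ψ
  hasCompactSupport : HasCompactSupport ψ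
  tsupport_subset : tsupport ψ ⊆ U
  nonneg (x : Euc N) : 0 ≤ ψ x

lemma exists_isNonnegTest_eq_one_nhdsSet {N : ℕ} {K U : Set (Euc N)} (hK : IsCompact K)
    (hU : IsOpen U) (hKU : K ⊆ U) :
    ∃ φ, IsNonnegTest U φ ∧ (∀ x, φ x ≤ 1) ∧ ∀ᶠ x in 𝓝ˢ K, φ x = 1 := by
  obtain ⟨L, hL, hKL, hLU⟩ := exists_compact_between hK hU hKU
  obtain ⟨φ, hφK, hφL, hφ⟩ := exists_contMDiffMap_one_nhds_of_subset_interior (n := 2)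
    (modelWithCornersSelf ℝ (Euc N)) hK.isClosed hKL
  have tsupport_subset : tsupport φ ⊆ L :=
    closure_minimal (fun x hx ↦ by_contra fun hxL ↦ hx (hφL x hxL)) hL.isClosed
  exact ⟨φ, ⟨φ.contMDiff.contDiff, hL.of_isClosed_subset (isClosed_tsupport _) tsupport_subset,
    tsupport_subset.trans hLU, fun x ↦ (hφ x).1⟩, fun x ↦ (hφ x).2, hφK⟩

namespace IsNonnegTest

variable {N : ℕ} {U V : Set (Euc N)} {φ χ ψ : Euc N → ℝ}

lemma mono (hψ : IsNonnegTest U ψ) (hUV : U ⊆ V) : IsNonnegTest V ψ :=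
  { hψ with tsupport_subset := hψ.tsupport_subset.trans hUV }

lemma add_const_mul (hφ : IsNonnegTest U φ) (hχ : IsNonnegTest U χ) {δ : ℝ} (hδ : 0 ≤ δ) :
    IsNonnegTest U fun x ↦ φ x + δ * χ x where
  contDiff := hφ.contDiff.add (contDiff_const.mul hχ.contDiff)
  hasCompactSupport := hφ.hasCompactSupport.add hχ.hasCompactSupport.mul_left
  tsupport_subset := (tsupport_add _ _).trans <| union_subset hφ.tsupport_subset <|
    tsupport_mul_subset_right.trans hχ.tsupport_subset
  nonneg x := add_nonneg (hφ.nonneg x) (mul_nonneg hδ (hχ.nonneg x))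

lemma continuous (hψ : IsNonnegTest U ψ) : Continuous ψ := hψ.contDiff.continuous

lemma eq_zero_of_notMem (hψ : IsNonnegTest U ψ) {x : Euc N} (hx : x ∉ U) : ψ x = 0 :=
  image_eq_zero_of_notMem_tsupport fun h ↦ hx (hψ.tsupport_subset h)

lemma integrable_of_forall_isCompact_lt_top (hψ : IsNonnegTest U ψ) {μ : Measure (Euc N)}
    (hμ : ∀ K ⊆ U, IsCompact K → μ K < ⊤) : Integrable ψ μ := by
  rw [← integrableOn_iff_integrable_of_support_subset (subset_tsupport ψ)]
  have : IsFiniteMeasure (μ.restrict (tsupport ψ)) :=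
    isFiniteMeasure_restrict.2 (hμ _ hψ.tsupport_subset hψ.hasCompactSupport).ne
  obtain ⟨C, hC⟩ := hψ.continuous.bounded_above_of_compact_support hψ.hasCompactSupport
  exact Integrable.of_bound hψ.continuous.aestronglyMeasurable C (ae_of_all _ hC)

lemma integrable (hψ : IsNonnegTest U ψ) : Integrable ψ :=
  hψ.continuous.integrable_of_hasCompactSupport hψ.hasCompactSupport

lemma le_of_eq_one_on (hφ : IsNonnegTest V φ) (hφ_le : ∀ x, φ x ≤ 1) (hχ : IsNonnegTest U χ)
    (hχV : ∀ x ∈ V, χ x = 1) (x : Euc N) : φ x ≤ χ x := by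
  by_cases hx : x ∈ V
  · exact (hφ_le x).trans (hχV x hx).ge
  · exact (hφ.eq_zero_of_notMem hx).trans_le (hχ.nonneg x)

lemma integral_le_of_volume_tsupport_le (hφ : IsNonnegTest U φ) (hφ_le : ∀ x, φ x ≤ 1) {δ : ℝ}
    (hδ : 0 ≤ δ) (hvol : volume (tsupport φ) ≤ ENNReal.ofReal δ) : ∫ x, φ x ≤ δ := by
  rw [← setIntegral_eq_integral_of_forall_compl_eq_zero
    fun x ↦ image_eq_zero_of_notMem_tsupport]
  calc ∫ x in tsupport φ, φ x ≤ ∫ _ in tsupport φ, (1 : ℝ) :=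
        setIntegral_mono hφ.integrable.integrableOn
          (integrableOn_const hφ.hasCompactSupport.measure_lt_top.ne) hφ_le
    _ = volume.real (tsupport φ) := by simp
    _ ≤ δ := ENNReal.toReal_le_of_le_ofReal hδ hvol

lemma integral_add_const_mul_le (hφ : IsNonnegTest V φ) (hφ_le : ∀ x, φ x ≤ 1)
    (hχ : IsNonnegTest U χ) {δ : ℝ} (hδ : 0 ≤ δ)
    (hvol : volume (tsupport φ) ≤ ENNReal.ofReal δ) :
    ∫ x, (φ x + δ * χ x) ≤ δ * (1 + ∫ x, χ x) := by
  rw [integral_add hφ.integrable (hχ.integrable.const_mul δ), integral_const_mul, mul_one_add]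
  gcongr
  exact hφ.integral_le_of_volume_tsupport_le hφ_le hδ hvol

/-- A nonzero compactly supported `φ ≥ 0` never satisfies `|Δφ| ≤ κ φ`; adding a small multiple of
a fixed `χ` equal to `1` near the support of `φ` achieves it up to the small error `δ C`. -/
lemma abs_lap_add_const_mul_le (hφ : IsNonnegTest V φ) (hχ : IsNonnegTest U χ)
    (hχV : ∀ x ∈ V, χ x = 1) {δ κ C : ℝ} (hδ : 0 ≤ δ) (hκ : 0 ≤ κ)
    (hlapφ : ∀ x, |lap φ x| ≤ κ * δ) (hlapχ : ∀ x, |lap χ x| ≤ C) (x : Euc N) :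
    |lap (fun y ↦ φ y + δ * χ y) x| ≤ κ * (φ x + δ * χ x) + δ * C := by
  have hlapφ_le : |lap φ x| ≤ κ * (φ x + δ * χ x) := by
    by_cases hx : x ∈ tsupport φ
    · rw [hχV x (hφ.tsupport_subset hx), mul_one, mul_add]
      exact (hlapφ x).trans (le_add_of_nonneg_left (mul_nonneg hκ (hφ.nonneg x)))
    · rw [Function.notMem_support.1 fun h ↦ hx (support_lap_subset h), abs_zero]
      exact mul_nonneg hκ (add_nonneg (hφ.nonneg x) (mul_nonneg hδ (hχ.nonneg x)))
  rw [lap_add hφ.contDiff (contDiff_const.mul hχ.contDiff), lap_const_mul]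
  calc |lap φ x + δ * lap χ x| ≤ |lap φ x| + δ * |lap χ x| := by
        simpa only [abs_mul, abs_of_nonneg hδ] using abs_add_le (lap φ x) (δ * lap χ x)
    _ ≤ κ * (φ x + δ * χ x) + δ * C := by gcongr; exact hlapχ x

lemma exists_forall_abs_lap_add_const_mul_le (hφ : IsNonnegTest V φ) (hχ : IsNonnegTest U χ)
    (hχV : ∀ x ∈ V, χ x = 1) {δ C : ℝ} (hδ : 0 < δ) (hlapχ : ∀ x, |lap χ x| ≤ C) (c : ℝ) :
    ∃ κ, c ≤ κ ∧ ∀ x, |lap (fun y ↦ φ y + δ * χ y) x| ≤ κ * (φ x + δ * χ x) + δ * C := by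
  obtain ⟨D, hD⟩ := exists_forall_abs_lap_le hφ.contDiff hφ.hasCompactSupport
  have hD0 : 0 ≤ D / δ := div_nonneg ((abs_nonneg _).trans (hD 0)) hδ.le
  have hDκ : D ≤ max c (D / δ) * δ := (div_le_iff₀ hδ).1 (le_max_right _ _)
  exact ⟨max c (D / δ), le_max_left _ _, hφ.abs_lap_add_const_mul_le hχ hχV hδ.le
    (hD0.trans (le_max_right _ _)) (fun x ↦ (hD x).trans hDκ) hlapχ⟩

end IsNonnegTest

lemma rho_pos {N : ℕ} {Ω : Set (Euc N)} (hΩo : IsOpen Ω) (hΩ : Ω ≠ univ) {x : Euc N}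
    (hx : x ∈ Ω) : 0 < rho Ω x :=
  (hΩo.isClosed_compl.notMem_iff_infDist_pos (nonempty_compl.2 hΩ)).1 (notMem_compl_iff.2 hx)

lemma continuous_rho {N : ℕ} {Ω : Set (Euc N)} : Continuous (rho Ω) :=
  Metric.continuous_infDist_pt _

namespace IsNonnegTest

variable {N : ℕ} {Ω : Set (Euc N)} {T : ℝ} {ψ : Euc N → ℝ} {η : ℝ → ℝ}

lemma integrableOn_mul_of_mul_rho (hψ : IsNonnegTest Ω ψ) (hΩo : IsOpen Ω) (hΩ : Ω ≠ univ)
    {h : Euc N × ℝ → ℝ} (hh : IntegrableOn (fun p ↦ h p * rho Ω p.1) (QT Ω T)) :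
    IntegrableOn (fun p ↦ ψ p.1 * h p) (QT Ω T) := by
  have continuousOn_div : ContinuousOn (fun x ↦ ψ x / rho Ω x) (tsupport ψ) :=
    hψ.continuous.continuousOn.div continuous_rho.continuousOn
      fun x hx ↦ (rho_pos hΩo hΩ (hψ.tsupport_subset hx)).ne'
  obtain ⟨C, hC⟩ := hψ.hasCompactSupport.exists_bound_of_continuousOn continuousOn_div
  have norm_div_le (x : Euc N) : ‖ψ x / rho Ω x‖ ≤ max C 0 := by
    by_cases hx : x ∈ tsupport ψ
    · exact (hC x hx).trans (le_max_left _ _)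
    · simp [image_eq_zero_of_notMem_tsupport hx]
  have measurable_div : Measurable fun p : Euc N × ℝ ↦ ψ p.1 / rho Ω p.1 :=
    (hψ.continuous.measurable.div continuous_rho.measurable).comp measurable_fst
  refine (hh.bdd_mul measurable_div.aestronglyMeasurable
    (ae_of_all _ fun p ↦ norm_div_le p.1)).congr ?_
  filter_upwards [ae_restrict_mem (hΩo.measurableSet.prod measurableSet_Ioo)] with p hp
  have := (rho_pos hΩo hΩ hp.1).ne'
  field_simp

lemma testZero_mul (hψ : IsNonnegTest Ω ψ) (hΩo : IsOpen Ω) (hη : ContDiff ℝ 1 η)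
    (hηT : η T = 0) : TestZero Ω T fun x t ↦ ψ x * η t := by
  have hψ' : Differentiable ℝ ψ := hψ.contDiff.differentiable two_ne_zero
  have hdψ : ContDiff ℝ 1 (fderiv ℝ ψ) := hψ.contDiff.fderiv_right le_rfl
  have hdψ' : Differentiable ℝ (fderiv ℝ ψ) := hdψ.differentiable one_ne_zero
  have hη' : Differentiable ℝ η := hη.differentiable one_ne_zero
  have continuous_deriv : Continuous (deriv η) := hη.continuous_deriv le_rfl
  have fderiv_mul (t : ℝ) (x : Euc N) : fderiv ℝ (fun y ↦ ψ y * η t) x = η t • fderiv ℝ ψ x :=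
    fderiv_mul_const (hψ' x) _
  have fderiv_fderiv_mul (t : ℝ) (x : Euc N) :
      fderiv ℝ (fun y ↦ η t • fderiv ℝ ψ y) x = η t • fderiv ℝ (fderiv ℝ ψ) x :=
    fderiv_fun_const_smul (hdψ' x) _
  refine ⟨⟨?_, fun x t ↦ (hη' t).const_mul _, ?_, fun t x ↦ (hψ' x).mul_const _, ?_, ?_, ?_⟩,
    fun x hx t _ ↦ ?_, fun x _ ↦ mul_eq_zero_of_right _ hηT⟩
  · exact (hψ.continuous.comp continuous_fst).mul (hη.continuous.comp continuous_snd)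
  · simp only [deriv_const_mul_field]
    exact (hψ.continuous.comp continuous_fst).mul (continuous_deriv.comp continuous_snd)
  · simp only [fderiv_mul]
    exact (hη.continuous.comp continuous_snd).smul (hdψ.continuous.comp continuous_fst)
  · simp only [fderiv_mul]
    exact fun t x ↦ (hdψ' x).fun_const_smul _
  · simp only [fderiv_mul, fderiv_fderiv_mul]
    exact (hη.continuous.comp continuous_snd).smul
      ((hdψ.continuous_fderiv one_ne_zero).comp continuous_fst)
  · have hxΩ : x ∉ Ω := fun hxΩ ↦ hΩo.inter_frontier_eq.subset ⟨hxΩ, hx⟩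
    exact mul_eq_zero_of_left (hψ.eq_zero_of_notMem hxΩ) _

end IsNonnegTest

lemma WeakSol.integral_mul_eq {N : ℕ} {Ω : Set (Euc N)} {T : ℝ} {g : ℝ → ℝ}
    {μ : Measure (Euc N)} {u : Euc N × ℝ → ℝ} {ψ : Euc N → ℝ} {η : ℝ → ℝ}
    (hu : WeakSol Ω T g μ u) (hΩo : IsOpen Ω) (hψ : IsNonnegTest Ω ψ) (hη : ContDiff ℝ 1 η)
    (hηT : η T = 0) :
    ∫ p in QT Ω T, (u p * (-(ψ p.1 * deriv η p.2) - lap ψ p.1 * η p.2)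
      + ψ p.1 * η p.2 * g (u p)) = (∫ x, ψ x ∂μ) * η 0 := by
  rw [← integral_mul_const, ← hu.2.2 _ (hψ.testZero_mul hΩo hη hηT)]
  refine integral_congr_ae (ae_of_all _ fun p ↦ ?_)
  have lap_mul : lap (fun y ↦ ψ y * η p.2) p.1 = lap ψ p.1 * η p.2 := by
    simpa only [mul_comm] using lap_const_mul (η p.2) ψ p.1
  simp only [deriv_const_mul_field, lap_mul]
  ring

/-! ### The time profile -/

/-- The time factor of the test functions. The exponential makes the negative time derivative
dominate `κ` times the function, so that it absorbs the Laplacian of the space factor; the affine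
factor makes it vanish at the final time `T`. -/
def timeProfile (T κ t : ℝ) : ℝ := Real.exp (-(κ * t)) * (1 - t / T)

section TimeProfile

variable {T κ ε t : ℝ}

lemma contDiff_timeProfile : ContDiff ℝ 1 (timeProfile T κ) := by
  unfold timeProfile
  fun_prop

lemma timeProfile_zero : timeProfile T κ 0 = 1 := by simp [timeProfile]

lemma timeProfile_self (hT : T ≠ 0) : timeProfile T κ T = 0 := by simp [timeProfile, hT]

lemma deriv_timeProfile :
    deriv (timeProfile T κ) t = -(κ * timeProfile T κ t + Real.exp (-(κ * t)) / T) := by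
  have hasDerivAt_exp : HasDerivAt (fun t ↦ Real.exp (-(κ * t))) (Real.exp (-(κ * t)) * -κ) t := by
    simpa using ((hasDerivAt_id t).const_mul κ).neg.exp
  have hasDerivAt_affine : HasDerivAt (fun t ↦ 1 - t / T) (-(1 / T)) t := by
    simpa using ((hasDerivAt_id t).div_const T).const_sub 1
  refine (hasDerivAt_exp.mul hasDerivAt_affine).deriv.trans ?_
  rw [timeProfile]
  ring

lemma timeProfile_mem_Icc (hT : 0 < T) (ht : t ∈ Icc 0 T) :
    timeProfile T κ t ∈ Icc 0 (Real.exp (-(κ * t))) := by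
  have hle : t / T ≤ 1 := (div_le_one hT).2 ht.2
  have hnonneg : 0 ≤ t / T := div_nonneg ht.1 hT.le
  exact ⟨mul_nonneg (Real.exp_nonneg _) (by linarith),
    mul_le_of_le_one_right (Real.exp_nonneg _) (by linarith)⟩

lemma mul_timeProfile_mem_Icc (hT : 0 < T) (hκ : 1 / T ≤ κ) (hε : 0 ≤ ε) (ht : t ∈ Icc 0 T)
    {a l : ℝ} (ha : 0 ≤ a) (hl : |l| ≤ κ * a + ε) :
    -(a * deriv (timeProfile T κ) t) - l * timeProfile T κ t ∈
      Icc (-ε) (3 * κ * (a * Real.exp (-(κ * t))) + ε) := by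
  obtain ⟨hη, hη_le⟩ := timeProfile_mem_Icc (κ := κ) hT ht
  have hκ0 : 0 ≤ κ := (one_div_pos.2 hT).le.trans hκ
  rw [deriv_timeProfile]
  set e := Real.exp (-(κ * t))
  set η := timeProfile T κ t
  have he : 0 ≤ e := Real.exp_nonneg _
  have he_le : e ≤ 1 := Real.exp_le_one_iff.2 (neg_nonpos.2 (mul_nonneg hκ0 ht.1))
  have hεη : ε * η ≤ ε := mul_le_of_le_one_right hε (hη_le.trans he_le)
  have hκη : a * (κ * η) ≤ a * (κ * e) := by gcongr
  have hdiv : a * (e / T) ≤ a * (κ * e) := by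
    rw [div_eq_mul_one_div, mul_comm κ e]
    gcongr
  have hdiv_nonneg : 0 ≤ a * (e / T) := mul_nonneg ha (div_nonneg he hT.le)
  have hlη : |l * η| ≤ (κ * a + ε) * η := by
    rw [abs_mul, abs_of_nonneg hη]
    gcongr
  obtain ⟨hl_ge, hl_le⟩ := abs_le.1 hlη
  constructor <;> linarith

lemma setIntegral_mul_exp_neg_mul_le_one (hκ : 0 < κ) :
    ∫ t in Ioo 0 T, κ * Real.exp (-(κ * t)) ≤ 1 := by
  simp only [← neg_mul]
  have integrableOn_exp := integrableOn_exp_mul_Ioi (neg_neg_of_pos hκ) 0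
  calc ∫ t in Ioo 0 T, κ * Real.exp (-κ * t)
      ≤ ∫ t in Ioi 0, κ * Real.exp (-κ * t) :=
        setIntegral_mono_set (integrableOn_exp.const_mul κ) (ae_of_all _ fun t ↦ by positivity)
          (ae_of_all _ Ioo_subset_Ioi_self)
    _ = 1 := by
      rw [integral_const_mul, integral_exp_mul_Ioi (neg_neg_of_pos hκ), mul_zero, Real.exp_zero]
      field_simp

end TimeProfile

/-! ### The key estimate -/

lemma mul_add_mul_le {u a b ψ η e G k ε : ℝ} (ha : a ∈ Icc (-ε) (b * (ψ * e) + ε)) (hψ : 0 ≤ ψ)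
    (he : e ∈ Icc 0 1) (hη : η ≤ 1) (hG : 0 ≤ G) (hk : 0 ≤ k) (hb : 0 ≤ b)
    (hbG : k ≤ u → b * u ≤ G) :
    u * a + ψ * η * G ≤ ε * |u| + 2 * (ψ * G) + k * b * (ψ * e) := by
  have hψG : 0 ≤ ψ * G := mul_nonneg hψ hG
  have hψηG : ψ * η * G ≤ ψ * G := by
    rw [mul_right_comm]
    exact mul_le_of_le_one_right hψG hη
  have hψe : 0 ≤ ψ * e := mul_nonneg hψ he.1
  have hkbψe : 0 ≤ k * b * (ψ * e) := by positivity
  suffices u * a ≤ ε * |u| + ψ * G + k * b * (ψ * e) by linarith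
  rcases le_total u 0 with hu | hu
  · rw [abs_of_nonpos hu]
    nlinarith [mul_le_mul_of_nonpos_left ha.1 hu]
  have hua : u * a ≤ u * b * (ψ * e) + ε * u := by
    linarith [mul_le_mul_of_nonneg_left ha.2 hu]
  rw [abs_of_nonneg hu]
  rcases le_total k u with hku | huk
  · have : b * u * (ψ * e) ≤ G * (ψ * 1) := by
      gcongr
      exacts [hbG hku, he.2]
    linarith
  · have : u * b * (ψ * e) ≤ k * b * (ψ * e) := by gcongr
    linarith

lemma mul_add_timeProfile_mul_le {T κ ε k t r a l G : ℝ} (hT : 0 < T) (hκ : 1 / T ≤ κ)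
    (hε : 0 ≤ ε) (ht : t ∈ Icc 0 T) (ha : 0 ≤ a) (hl : |l| ≤ κ * a + ε) (hG : 0 ≤ G) (hk : 0 ≤ k)
    (hGk : k ≤ r → 3 * κ * r ≤ G) :
    r * (-(a * deriv (timeProfile T κ) t) - l * timeProfile T κ t) + a * timeProfile T κ t * G
      ≤ ε * |r| + 2 * (a * G) + 3 * k * (a * (κ * Real.exp (-(κ * t)))) := by
  have hκ0 : 0 ≤ κ := (one_div_pos.2 hT).le.trans hκ
  have exp_le_one : Real.exp (-(κ * t)) ≤ 1 :=
    Real.exp_le_one_iff.2 (neg_nonpos.2 (mul_nonneg hκ0 ht.1))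
  refine (mul_add_mul_le (mul_timeProfile_mem_Icc hT hκ hε ht ha hl) ha
    ⟨Real.exp_nonneg _, exp_le_one⟩ ((timeProfile_mem_Icc hT ht).2.trans exp_le_one) hG hk
    (by positivity) hGk).trans_eq ?_
  ring

lemma IsNonnegTest.setIntegral_mul_exp_le {N : ℕ} {Ω : Set (Euc N)} {ψ : Euc N → ℝ}
    (hψ : IsNonnegTest Ω ψ) {T κ : ℝ} (hκ : 0 < κ) :
    ∫ p in QT Ω T, ψ p.1 * (κ * Real.exp (-(κ * p.2))) ≤ ∫ x, ψ x := by
  rw [QT, Measure.volume_eq_prod,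
    setIntegral_prod_mul ψ (fun t ↦ κ * Real.exp (-(κ * t))),
    setIntegral_eq_integral_of_forall_compl_eq_zero fun x ↦ hψ.eq_zero_of_notMem]
  exact mul_le_of_le_one_right (integral_nonneg hψ.nonneg) (setIntegral_mul_exp_neg_mul_le_one hκ)

lemma IsNonnegTest.integrableOn_mul_exp {N : ℕ} {Ω : Set (Euc N)} {ψ : Euc N → ℝ}
    (hψ : IsNonnegTest Ω ψ) (T κ : ℝ) :
    IntegrableOn (fun p ↦ ψ p.1 * (κ * Real.exp (-(κ * p.2)))) (QT Ω T) := by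
  rw [QT, IntegrableOn, Measure.volume_eq_prod, ← Measure.prod_restrict]
  have continuous_exp : Continuous fun t : ℝ ↦ κ * Real.exp (-(κ * t)) := by fun_prop
  exact hψ.integrable.restrict.mul_prod
    (continuous_exp.integrableOn_Ioc.mono_set Ioo_subset_Ioc_self)

lemma WeakSol.integral_le {N : ℕ} {Ω : Set (Euc N)} {T : ℝ} {g : ℝ → ℝ}
    {μ : Measure (Euc N)} {u : Euc N × ℝ → ℝ} {ψ : Euc N → ℝ} {κ ε k : ℝ}
    (hu : WeakSol Ω T g μ u) (hΩo : IsOpen Ω) (hΩ : Ω ≠ univ) (hT : 0 < T) (hg : ∀ r, 0 ≤ g r)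
    (hψ : IsNonnegTest Ω ψ) (hlap : ∀ x, |lap ψ x| ≤ κ * ψ x + ε) (hκ : 1 / T ≤ κ) (hε : 0 ≤ ε)
    (hk : 0 ≤ k) (hgk : ∀ r, k ≤ r → 3 * κ * r ≤ g r) :
    ∫ x, ψ x ∂μ ≤ ε * (∫ p in QT Ω T, |u p|) + 2 * (∫ p in QT Ω T, ψ p.1 * g (u p))
      + 3 * k * ∫ x, ψ x := by
  have hκ0 : 0 < κ := (one_div_pos.2 hT).trans_le hκ
  have integrable_abs : IntegrableOn (fun p ↦ ε * |u p|) (QT Ω T) := hu.1.abs.const_mul ε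
  have integrable_mul : IntegrableOn (fun p ↦ 2 * (ψ p.1 * g (u p))) (QT Ω T) :=
    (hψ.integrableOn_mul_of_mul_rho hΩo hΩ hu.2.1).const_mul 2
  have integrable_exp := (hψ.integrableOn_mul_exp T κ).const_mul (3 * k)
  have integrable_add := integrable_abs.fun_add integrable_mul
  set F : Euc N × ℝ → ℝ := fun p ↦ u p * (-(ψ p.1 * deriv (timeProfile T κ) p.2)
    - lap ψ p.1 * timeProfile T κ p.2) + ψ p.1 * timeProfile T κ p.2 * g (u p)
  set M : Euc N × ℝ → ℝ := fun p ↦ ε * |u p| + 2 * (ψ p.1 * g (u p))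
    + 3 * k * (ψ p.1 * (κ * Real.exp (-(κ * p.2))))
  have M_nonneg (p : Euc N × ℝ) : 0 ≤ M p := by
    have := hψ.nonneg p.1
    have := hg (u p)
    positivity
  have F_le_M : ∀ p ∈ QT Ω T, F p ≤ M p := fun p hp ↦
    mul_add_timeProfile_mul_le hT hκ hε (Ioo_subset_Icc_self hp.2) (hψ.nonneg p.1) (hlap p.1)
      (hg _) hk (hgk _)
  calc ∫ x, ψ x ∂μ = ∫ p in QT Ω T, F p := by
        rw [hu.integral_mul_eq hΩo hψ contDiff_timeProfile (timeProfile_self hT.ne'),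
          timeProfile_zero, mul_one]
    _ ≤ ∫ p in QT Ω T, M p := by
        by_cases hF : IntegrableOn F (QT Ω T)
        · exact setIntegral_mono_on hF (integrable_add.fun_add integrable_exp)
            (hΩo.measurableSet.prod measurableSet_Ioo) F_le_M
        · exact (integral_undef hF).trans_le (integral_nonneg M_nonneg)
    _ = ε * (∫ p in QT Ω T, |u p|) + 2 * (∫ p in QT Ω T, ψ p.1 * g (u p))
        + 3 * k * ∫ p in QT Ω T, ψ p.1 * (κ * Real.exp (-(κ * p.2))) := by
        simp only [M, integral_add integrable_add integrable_exp,
          integral_add integrable_abs integrable_mul, integral_const_mul]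
    _ ≤ _ := by gcongr; exact hψ.setIntegral_mul_exp_le hκ0

/-! ### Concentrating test functions -/

/-- The test functions `ψ n ≤ χ` in `Ω` are at least `1` on `K` and concentrate on `K`: they tend to
`0` almost everywhere, with `∫ ψ n = o(1 / n)`. Their Laplacians are dominated by `κ n * ψ n` up to
the vanishing error `ε n`, while `κ n` may grow arbitrarily fast. -/
structure IsConcentrating {N : ℕ} (Ω K : Set (Euc N)) (χ : Euc N → ℝ) (ψ : ℕ → Euc N → ℝ)
    (κ ε : ℕ → ℝ) : Prop where
  isNonnegTest_majorant : IsNonnegTest Ω χ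
  isNonnegTest (n : ℕ) : IsNonnegTest Ω (ψ n)
  le_majorant (n : ℕ) (x : Euc N) : ψ n x ≤ χ x
  one_le (n : ℕ) : ∀ x ∈ K, 1 ≤ ψ n x
  abs_lap_le (n : ℕ) (x : Euc N) : |lap (ψ n) x| ≤ κ n * ψ n x + ε n
  error_nonneg (n : ℕ) : 0 ≤ ε n
  tendsto_error : Tendsto ε atTop (𝓝 0)
  ae_tendsto : ∀ᵐ x, Tendsto (fun n ↦ ψ n x) atTop (𝓝 0)
  tendsto_integral : Tendsto (fun n : ℕ ↦ (n + 1) * ∫ x, ψ n x) atTop (𝓝 0)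

lemma exists_isNonnegTest_volume_tsupport_le {N : ℕ} {K V : Set (Euc N)} (hK : IsCompact K)
    (hK0 : volume K = 0) (hV : IsOpen V) (hKV : K ⊆ V) {δ : ℝ} (hδ : 0 < δ) :
    ∃ φ, IsNonnegTest V φ ∧ (∀ x, φ x ≤ 1) ∧ (∀ x ∈ K, φ x = 1) ∧
      volume (tsupport φ) ≤ ENNReal.ofReal δ := by
  obtain ⟨U, hKU, hU, hU_lt⟩ := K.exists_isOpen_lt_of_lt (μ := volume) (ENNReal.ofReal δ)
    (hK0 ▸ ENNReal.ofReal_pos.2 hδ)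
  obtain ⟨φ, hφ, hφ_le, hφK⟩ :=
    exists_isNonnegTest_eq_one_nhdsSet hK (hU.inter hV) (subset_inter hKU hKV)
  exact ⟨φ, hφ.mono inter_subset_right, hφ_le, hφK.self_of_nhdsSet,
    (measure_mono (hφ.tsupport_subset.trans inter_subset_left)).trans hU_lt.le⟩

lemma ae_eventually_eq_zero_of_summable_volume_tsupport {N : ℕ} {φ : ℕ → Euc N → ℝ} {δ : ℕ → ℝ}
    (hδ : Summable δ) (hφ : ∀ n, volume (tsupport (φ n)) ≤ ENNReal.ofReal (δ n)) :
    ∀ᵐ x, ∀ᶠ n in atTop, φ n x = 0 := by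
  have tsum_ne_top : ∑' n, volume (tsupport (φ n)) ≠ ⊤ :=
    ne_top_of_le_ne_top hδ.tsum_ofReal_ne_top (ENNReal.tsum_le_tsum hφ)
  filter_upwards [ae_eventually_notMem tsum_ne_top] with x hx
  filter_upwards [hx] with n using image_eq_zero_of_notMem_tsupport

lemma isConcentrating_add_const_mul {N : ℕ} {Ω K V : Set (Euc N)} {χ : Euc N → ℝ}
    {φ : ℕ → Euc N → ℝ} {δ κ : ℕ → ℝ} {C : ℝ} (hχ : IsNonnegTest Ω χ) (hχV : ∀ x ∈ V, χ x = 1)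
    (hC : 0 ≤ C) (hφ : ∀ n, IsNonnegTest V (φ n)) (hφ_le : ∀ n x, φ n x ≤ 1)
    (hφK : ∀ n, ∀ x ∈ K, φ n x = 1)
    (hφδ : ∀ n, volume (tsupport (φ n)) ≤ ENNReal.ofReal (δ n))
    (hδ : ∀ n, δ n ∈ Icc 0 1) (hδ_summable : Summable δ)
    (hδ_tendsto : Tendsto (fun n : ℕ ↦ (n + 1) * δ n) atTop (𝓝 0))
    (hlap : ∀ n x,
      |lap (fun y ↦ φ n y + δ n * χ y) x| ≤ κ n * (φ n x + δ n * χ x) + δ n * C) :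
    IsConcentrating Ω K (fun x ↦ χ x + 1 * χ x) (fun n x ↦ φ n x + δ n * χ x) κ
      (fun n ↦ δ n * C) := by
  have hVΩ : V ⊆ Ω := fun x hx ↦ by_contra fun hxΩ ↦
    zero_ne_one ((hχ.eq_zero_of_notMem hxΩ).symm.trans (hχV x hx))
  have tendsto_δ : Tendsto δ atTop (𝓝 0) := hδ_summable.tendsto_atTop_zero
  have isNonnegTest (n : ℕ) : IsNonnegTest Ω fun x ↦ φ n x + δ n * χ x :=
    ((hφ n).mono hVΩ).add_const_mul hχ (hδ n).1
  refine ⟨hχ.add_const_mul hχ zero_le_one, isNonnegTest, fun n x ↦ ?_, fun n x hx ↦ ?_, hlap,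
    fun n ↦ mul_nonneg (hδ n).1 hC, ?_, ?_, ?_⟩
  · have := hχ.nonneg x
    gcongr
    exacts [(hφ n).le_of_eq_one_on (hφ_le n) hχ hχV x, (hδ n).2]
  · rw [hφK n x hx]
    exact le_add_of_nonneg_right (mul_nonneg (hδ n).1 (hχ.nonneg x))
  · simpa only [zero_mul] using tendsto_δ.mul_const C
  · filter_upwards [ae_eventually_eq_zero_of_summable_volume_tsupport hδ_summable hφδ] with x hx
    have tendsto_φ : Tendsto (fun n ↦ φ n x) atTop (𝓝 0) :=
      tendsto_const_nhds.congr' (hx.mono fun n hn ↦ hn.symm)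
    simpa only [zero_mul, zero_add] using tendsto_φ.add (tendsto_δ.mul_const (χ x))
  · refine squeeze_zero (fun n ↦ mul_nonneg (by positivity)
      (integral_nonneg (isNonnegTest n).nonneg)) (fun n ↦ ?_)
      (zero_mul (1 + ∫ x, χ x) ▸ hδ_tendsto.mul_const (1 + ∫ x, χ x))
    rw [mul_assoc]
    gcongr
    exact (hφ n).integral_add_const_mul_le (hφ_le n) hχ (hδ n).1 (hφδ n)

lemma exists_isConcentrating {N : ℕ} {Ω K : Set (Euc N)} (hΩo : IsOpen Ω) (hK : IsCompact K)
    (hKΩ : K ⊆ Ω) (hK0 : volume K = 0) (c : ℝ) :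
    ∃ χ ψ κ ε, IsConcentrating Ω K χ ψ κ ε ∧ ∀ n, c ≤ κ n := by
  obtain ⟨χ, hχ, -, hχK⟩ := exists_isNonnegTest_eq_one_nhdsSet hK hΩo hKΩ
  obtain ⟨V, hV, hKV, hχV⟩ := eventually_nhdsSet_iff_exists.1 hχK
  let δ (n : ℕ) : ℝ := (1 / 2) ^ n
  have δ_pos (n : ℕ) : 0 < δ n := by positivity
  have δ_le_one (n : ℕ) : δ n ≤ 1 := pow_le_one₀ (by norm_num) (by norm_num)
  have tendsto_mul_δ : Tendsto (fun n : ℕ ↦ (n + 1) * δ n) atTop (𝓝 0) := by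
    simpa only [add_one_mul, zero_add] using
      (tendsto_self_mul_const_pow_of_lt_one (by norm_num) (by norm_num)).add
        summable_geometric_two.tendsto_atTop_zero
  obtain ⟨C, hC⟩ := exists_forall_abs_lap_le hχ.contDiff hχ.hasCompactSupport
  choose φ hφ hφ_le hφK hφδ using fun n ↦
    exists_isNonnegTest_volume_tsupport_le hK hK0 hV hKV (δ_pos n)
  choose κ hκ hlap using fun n ↦
    (hφ n).exists_forall_abs_lap_add_const_mul_le hχ hχV (δ_pos n) hC c
  exact ⟨_, _, κ, _, isConcentrating_add_const_mul hχ hχV ((abs_nonneg _).trans (hC 0)) hφ hφ_le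
    hφK hφδ (fun n ↦ ⟨(δ_pos n).le, δ_le_one n⟩) summable_geometric_two tendsto_mul_δ hlap, hκ⟩

namespace IsConcentrating

variable {N : ℕ} {Ω K : Set (Euc N)} {χ : Euc N → ℝ} {ψ : ℕ → Euc N → ℝ} {κ ε : ℕ → ℝ}

lemma tendsto_setIntegral_mul (hψ : IsConcentrating Ω K χ ψ κ ε) (hΩo : IsOpen Ω)
    (hΩ : Ω ≠ univ) {T : ℝ} {f : Euc N × ℝ → ℝ}
    (hf : IntegrableOn (fun p ↦ f p * rho Ω p.1) (QT Ω T)) :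
    Tendsto (fun n ↦ ∫ p in QT Ω T, ψ n p.1 * f p) atTop (𝓝 0) := by
  rw [← integral_zero (Euc N × ℝ) ℝ (μ := volume.restrict (QT Ω T))]
  refine tendsto_integral_of_dominated_convergence (fun p ↦ ‖χ p.1 * f p‖)
    (fun n ↦ ((hψ.isNonnegTest n).integrableOn_mul_of_mul_rho hΩo hΩ hf).aestronglyMeasurable)
    (hψ.isNonnegTest_majorant.integrableOn_mul_of_mul_rho hΩo hΩ hf).norm
    (fun n ↦ ae_of_all _ fun p ↦ ?_) (ae_restrict_of_ae ?_)
  · rw [norm_mul, norm_mul, Real.norm_of_nonneg ((hψ.isNonnegTest n).nonneg _),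
      Real.norm_of_nonneg (hψ.isNonnegTest_majorant.nonneg _)]
    gcongr
    exact hψ.le_majorant n p.1
  · filter_upwards [Measure.quasiMeasurePreserving_fst.ae hψ.ae_tendsto] with p hp
    simpa using hp.mul_const (f p)

lemma measureReal_le_integral (hψ : IsConcentrating Ω K χ ψ κ ε) {μ : Measure (Euc N)}
    (hμ : ∀ L ⊆ Ω, IsCompact L → μ L < ⊤) (n : ℕ) : μ.real K ≤ ∫ x, ψ n x ∂μ := by
  have integrable := (hψ.isNonnegTest n).integrable_of_forall_isCompact_lt_top hμ
  calc μ.real K ≤ μ.real {x | 1 ≤ ψ n x} :=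
        measureReal_mono (hψ.one_le n) (integrable.measure_ge_lt_top one_pos).ne
    _ ≤ ∫ x, ψ n x ∂μ := by
        simpa using mul_meas_ge_le_integral_of_nonneg (ae_of_all _ (hψ.isNonnegTest n).nonneg)
          integrable 1

end IsConcentrating

lemma measure_eq_zero_of_isCompact_of_volume_eq_zero {N : ℕ} {Ω K : Set (Euc N)} {T : ℝ}
    {μ : Measure (Euc N)} (hΩo : IsOpen Ω) (hΩ : Ω ≠ univ) (hT : 0 < T)
    (hμ : ∀ L ⊆ Ω, IsCompact L → μ L < ⊤) (hgood : ∀ g, GoodG g → GoodMeasure Ω T g μ)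
    (hKΩ : K ⊆ Ω) (hK : IsCompact K) (hK0 : volume K = 0) : μ K = 0 := by
  obtain ⟨χ, ψ, κ, ε, hψ, hκ⟩ := exists_isConcentrating hΩo hK hKΩ hK0 (1 / T)
  have hκ0 (n : ℕ) : 0 ≤ 3 * κ n := by linarith [one_div_pos.2 hT, hκ n]
  obtain ⟨g, hg, hgκ⟩ := exists_goodG_forall_mul_le hκ0
  obtain ⟨u, hu⟩ := hgood g hg
  have measure_le (n : ℕ) : μ.real K ≤ ε n * (∫ p in QT Ω T, |u p|)
      + 2 * (∫ p in QT Ω T, ψ n p.1 * g (u p)) + 3 * ((n + 1) * ∫ x, ψ n x) := by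
    rw [← mul_assoc]
    exact (hψ.measureReal_le_integral hμ n).trans <| hu.integral_le hΩo hΩ hT hg.nonneg
      (hψ.isNonnegTest n) (hψ.abs_lap_le n) (hκ n) (hψ.error_nonneg n) (by positivity) (hgκ n)
  have tendsto_bound := ((hψ.tendsto_error.mul_const (∫ p in QT Ω T, |u p|)).add
    ((hψ.tendsto_setIntegral_mul hΩo hΩ hu.2.1).const_mul 2)).add
      (hψ.tendsto_integral.const_mul 3)
  simp only [zero_mul, mul_zero, add_zero] at tendsto_bound
  rw [← measureReal_eq_zero_iff (hμ K hKΩ hK).ne]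
  exact (ge_of_tendsto' tendsto_bound measure_le).antisymm measureReal_nonneg

/-! ### Absolute continuity and densities -/

section Measures

variable {X : Type*} [MeasurableSpace X] {μ ν : Measure X} {Ω : Set X}

lemma sigmaFinite_of_isSigmaCompact [TopologicalSpace X] (hΩ : IsSigmaCompact Ω)
    (hμΩ : μ Ωᶜ = 0) (hμ : ∀ K ⊆ Ω, IsCompact K → μ K < ⊤) : SigmaFinite μ := by
  obtain ⟨K, hK, hKΩ⟩ := hΩ
  refine ⟨⟨⟨fun n ↦ K n ∪ Ωᶜ, fun _ ↦ mem_univ _, fun n ↦ ?_, ?_⟩⟩⟩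
  · calc μ (K n ∪ Ωᶜ) ≤ μ (K n) + μ Ωᶜ := measure_union_le _ _
      _ = μ (K n) := by rw [hμΩ, add_zero]
      _ < ⊤ := hμ (K n) (hKΩ ▸ subset_iUnion K n) (hK n)
  · rw [← iUnion_union, hKΩ, union_compl_self]

lemma absolutelyContinuous_restrict_of_forall_isCompact [TopologicalSpace X] [μ.InnerRegular]
    (hΩ : MeasurableSet Ω) (hμΩ : μ Ωᶜ = 0)
    (h : ∀ K ⊆ Ω, IsCompact K → ν K = 0 → μ K = 0) : μ ≪ ν.restrict Ω := by
  refine .mk fun s hs hνs ↦ by_contra fun hμs ↦ ?_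
  rw [Measure.restrict_apply hs] at hνs
  have inter_pos : 0 < μ (s ∩ Ω) := by
    rwa [measure_inter_conull hμΩ, pos_iff_ne_zero]
  obtain ⟨K, hKs, hK, hK_pos⟩ := (hs.inter hΩ).exists_lt_isCompact inter_pos
  exact hK_pos.ne' (h K (hKs.trans inter_subset_right) hK (measure_mono_null hKs hνs))

lemma withDensity_ofReal_toReal_rnDeriv [SigmaFinite μ] [SigmaFinite ν] (h : μ ≪ ν) :
    ν.withDensity (fun x ↦ ENNReal.ofReal (μ.rnDeriv ν x).toReal) = μ := by
  conv_rhs => rw [← Measure.withDensity_rnDeriv_eq μ ν h]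
  refine withDensity_congr_ae ?_
  filter_upwards [Measure.rnDeriv_lt_top μ ν] with x hx using ENNReal.ofReal_toReal hx.ne

end Measures

theorem stmt_19_general {N : ℕ} (Ω : Set (Euc N)) (hΩo : IsOpen Ω) (hΩ : Ω ≠ univ) (T : ℝ)
    (hT : 0 < T) (μ : Measure (Euc N)) (hμ : MemM1 Ω μ)
    (hgood : ∀ g : ℝ → ℝ, GoodG g → GoodMeasure Ω T g μ) :
    ∃ f : Euc N → ℝ, Measurable f ∧ (∀ x, 0 ≤ f x) ∧
      IntegrableOn (fun x ↦ f x * rho Ω x) Ω ∧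
      μ = (volume.restrict Ω).withDensity (fun x ↦ ENNReal.ofReal (f x)) := by
  obtain ⟨hμΩ, hμK, hμρ⟩ := hμ
  have : LocallyCompactSpace Ω := hΩo.locallyCompactSpace
  have : SigmaFinite μ :=
    sigmaFinite_of_isSigmaCompact (isSigmaCompact_iff_sigmaCompactSpace.2 inferInstance) hμΩ hμK
  have absolutelyContinuous : μ ≪ volume.restrict Ω :=
    absolutelyContinuous_restrict_of_forall_isCompact hΩo.measurableSet hμΩ fun K ↦
      measure_eq_zero_of_isCompact_of_volume_eq_zero hΩo hΩ hT hμK hgood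
  have integrable_rho : Integrable (rho Ω) μ :=
    (lintegral_ofReal_ne_top_iff_integrable continuous_rho.aestronglyMeasurable
      (ae_of_all _ fun _ ↦ Metric.infDist_nonneg)).1 hμρ.ne
  exact ⟨fun x ↦ (μ.rnDeriv (volume.restrict Ω) x).toReal,
    (Measure.measurable_rnDeriv _ _).ennreal_toReal, fun _ ↦ ENNReal.toReal_nonneg,
    (integrable_toReal_rnDeriv_mul_iff absolutelyContinuous).2 integrable_rho,
    (withDensity_ofReal_toReal_rnDeriv absolutelyContinuous).symm⟩

/-- **Theorem 2.23.** If `μ ∈ M¹₊(Ω)` is a good measure relative to every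
continuous nondecreasing `g` vanishing on `(−∞,0]`, then `μ ∈ L¹_ρ(Ω)` :
`dμ = f dx` for some nonnegative `f` with `∫_Ω f ρ dx < ∞`. -/
theorem stmt_19 {N : ℕ} (hN : 1 ≤ N) (Ω : Set (Euc N)) (hΩo : IsOpen Ω)
    (hΩc : IsConnected Ω) (hΩb : Bornology.IsBounded Ω) (T : ℝ) (hT : 0 < T)
    (μ : Measure (Euc N)) (hμ : MemM1 Ω μ)
    (hgood : ∀ g : ℝ → ℝ, GoodG g → GoodMeasure Ω T g μ) :
    ∃ f : Euc N → ℝ, Measurable f ∧ (∀ x, 0 ≤ f x) ∧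
      IntegrableOn (fun x => f x * rho Ω x) Ω ∧
      μ = (volume.restrict Ω).withDensity (fun x => ENNReal.ofReal (f x)) := by
  have : Nonempty (Fin N) := ⟨⟨0, hN⟩⟩
  have hΩ : Ω ≠ univ := by
    rintro rfl
    exact NormedSpace.unbounded_univ ℝ (Euc N) hΩb
  exact stmt_19_general Ω hΩo hΩ T hT μ hμ hgood
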